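/- Let β > 0 and let j ≥ 1 be an integer. Then, as n → ∞, E_n^β[ ∑_{μ=1}^n e^{ijθ_μ} ] → 0 and E_n^β[ | ∑_{μ=1}^n e^{ijθ_μ} |² ] → 2j/β. (This is the moment convergence of Lemma 4.2 of the paper in the case of the unit circle, where the Grunsky operator K and the vector d vanish.) -/

import Mathlib

/-!
Write `p_k(θ) = ∑_μ e^{ikθ_μ}`. The proof uses the loop (Schwinger–Dyson) equations of the ensemble:
integrating by parts along the vector field with components `e^{ijθ_μ} G(θ)` gives, for smooth
periodic `G`,
`E[i j p_j G + ∑_μ e^{ijθ_μ} ∂_μ G + (β/2) i S_j G] = 0`, where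
`S_j = ∑_{μ<ν} (z_μ + z_ν)(z_μ^j - z_ν^j)/(z_μ - z_ν)` with `z_μ = e^{iθ_μ}`, that is,
`S_j = (n - j) p_j + ∑_{0<k<j} p_k p_{j-k}` for `j ≥ 1` (`sum_pairPoly`).

For small `β` the density is not differentiable at collisions. The equation is therefore first
proved for the smooth density `∏_{μ<ν} (|z_μ - z_ν|² + ε)^{β/2}` (`schwinger_dyson_reg`), by the
divergence theorem on the cube, where opposite faces cancel by periodicity. In the symmetrized
equation `ε` enters, besides the density, only through factors `q/(q+ε) ∈ [0,1]` with
`q = |z_μ - z_ν|²`, so dominated convergence yields the limit `ε → 0` (`schwinger_dyson`).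

The field with `j = 0` and `G = p_j` gives `E[p_j] = 0`. The choice `G = conj p_j` gives
`(j + (β/2)(n - j)) E|p_j|² = j n - (β/2) ∑_{0<k<j} E[p_k p_{j-k} conj p_j]`
(`second_moment_bound`). The sum on the right is bounded in `n`, because fourth moments of the power
sums are (`fourth_moment_bounded`, by induction on `j` from the loop equation with
`G = |p_j|² conj p_j`). Dividing by the coefficient on the left, `E|p_j|² → 2j/β`.
-/

open MeasureTheory Finset Filter Topology

/-- The cube `[0, 2π]^n`. -/
noncomputable def cbeCube (n : ℕ) : Set (Fin n → ℝ) :=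
  Set.univ.pi fun _ => Set.Icc 0 (2 * Real.pi)

/-- The (unnormalized) density `∏_{μ<ν} |e^{iθ_μ} - e^{iθ_ν}|^β` of the circular β-ensemble. -/
noncomputable def cbeWeight (β : ℝ) (n : ℕ) (θ : Fin n → ℝ) : ℝ :=
  ∏ p ∈ Finset.univ.filter (fun p : Fin n × Fin n => p.1 < p.2),
    ‖Complex.exp (Complex.I * (θ p.1 : ℂ)) - Complex.exp (Complex.I * (θ p.2 : ℂ))‖ ^ β

/-- Expectation `E_n^β[f]` with respect to the circular β-ensemble (real valued test functions). -/
noncomputable def cbeExp (β : ℝ) (n : ℕ) (f : (Fin n → ℝ) → ℝ) : ℝ :=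
  (∫ θ in cbeCube n, f θ * cbeWeight β n θ) / ∫ θ in cbeCube n, cbeWeight β n θ

/-- Expectation `E_n^β[f]` with respect to the circular β-ensemble (complex valued test
functions). -/
noncomputable def cbeExpC (β : ℝ) (n : ℕ) (f : (Fin n → ℝ) → ℂ) : ℂ :=
  (∫ θ in cbeCube n, f θ * (cbeWeight β n θ : ℂ)) /
    ((∫ θ in cbeCube n, cbeWeight β n θ : ℝ) : ℂ)

/-! ### Power sums and the regularized density -/

/-- The character `x ↦ e^{ikx}`. -/
noncomputable def cbeChar (k : ℤ) (x : ℝ) : ℂ := Complex.exp (Complex.I * (k : ℂ) * (x : ℂ))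

/-- The power sum `p_k(θ) = ∑_μ e^{ikθ_μ}`, for any integer `k`. -/
noncomputable def powSum {n : ℕ} (k : ℤ) (θ : Fin n → ℝ) : ℂ := ∑ μ, cbeChar k (θ μ)

/-- The pairs `μ < ν` of indices. -/
def cbePairs (n : ℕ) : Finset (Fin n × Fin n) := Finset.univ.filter (fun p => p.1 < p.2)

/-- A function of the angles that factors through the points `e^{iθ_μ}` of the circle. -/
def CirclePeriodic {n : ℕ} (f : (Fin n → ℝ) → ℂ) : Prop :=
  ∀ θ θ' : Fin n → ℝ, (∀ μ, cbeChar 1 (θ μ) = cbeChar 1 (θ' μ)) → f θ = f θ'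

/-- `|e^{ix} - e^{iy}|²`, written as a smooth function of the angles. -/
noncomputable def chordSq (x y : ℝ) : ℝ := 2 - 2 * Real.cos (x - y)

/-- The regularized density `∏_{μ<ν} (|e^{iθ_μ} - e^{iθ_ν}|² + ε)^{β/2}`; it is smooth for
`ε > 0` and equals the density of the ensemble for `ε = 0`. -/
noncomputable def regWeight (β ε : ℝ) {n : ℕ} (θ : Fin n → ℝ) : ℝ :=
  ∏ p ∈ cbePairs n, (chordSq (θ p.1) (θ p.2) + ε) ^ (β / 2)

/-- The polynomial `(z + w)(z^j - w^j)/(z - w) = ∑_{k<j} (z^{k+1} w^{j-1-k} + z^k w^{j-k})`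
at `z = e^{ix}`, `w = e^{iy}`. -/
noncomputable def pairPoly (j : ℕ) (x y : ℝ) : ℂ :=
  ∑ k ∈ Finset.range j, (cbeChar (k + 1) x * cbeChar (j - 1 - k) y +
    cbeChar k x * cbeChar (j - k) y)

/-! ### Characters and derivatives -/

lemma cbeChar_mul (k l : ℤ) (x : ℝ) : cbeChar k x * cbeChar l x = cbeChar (k + l) x := by
  simp only [cbeChar, ← Complex.exp_add]
  congr 1; push_cast; ring

lemma cbeChar_zero (x : ℝ) : cbeChar 0 x = 1 := by simp [cbeChar]

lemma cbeChar_zpow (k : ℤ) (x : ℝ) : cbeChar k x = cbeChar 1 x ^ k := by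
  simp only [cbeChar, ← Complex.exp_int_mul]
  congr 1; push_cast; ring

lemma conj_cbeChar (k : ℤ) (x : ℝ) : (starRingEnd ℂ) (cbeChar k x) = cbeChar (-k) x := by
  simp only [cbeChar, ← Complex.exp_conj]
  congr 1; simp

lemma norm_cbeChar (k : ℤ) (x : ℝ) : ‖cbeChar k x‖ = 1 := by
  rw [cbeChar, show Complex.I * (k : ℂ) * (x : ℂ) = ((k * x : ℝ) : ℂ) * Complex.I by
    push_cast; ring]
  exact Complex.norm_exp_ofReal_mul_I _

lemma cbeChar_two_pi : cbeChar 1 (2 * Real.pi) = cbeChar 1 0 := by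
  simp only [cbeChar]
  rw [show Complex.I * ((1 : ℤ) : ℂ) * ((2 * Real.pi : ℝ) : ℂ) = 2 * Real.pi * Complex.I by
    push_cast; ring, Complex.exp_two_pi_mul_I]
  simp

lemma contDiff_cbeChar (k : ℤ) : ContDiff ℝ 1 (cbeChar k) := by
  unfold cbeChar
  exact (contDiff_const.mul Complex.ofRealCLM.contDiff).cexp

lemma contDiff_cbeChar_apply {n : ℕ} (k : ℤ) (μ : Fin n) :
    ContDiff ℝ 1 (fun θ : Fin n → ℝ => cbeChar k (θ μ)) :=
  (contDiff_cbeChar k).comp (contDiff_apply ℝ ℝ μ)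

lemma contDiff_powSum {n : ℕ} (k : ℤ) : ContDiff ℝ 1 (fun θ : Fin n → ℝ => powSum k θ) := by
  unfold powSum
  exact ContDiff.sum fun μ _ => contDiff_cbeChar_apply k μ

@[fun_prop]
lemma continuous_powSum {n : ℕ} (k : ℤ) : Continuous (fun θ : Fin n → ℝ => powSum k θ) :=
  (contDiff_powSum k).continuous

@[fun_prop]
lemma continuous_cbeChar (k : ℤ) : Continuous (cbeChar k) := (contDiff_cbeChar k).continuous

lemma conj_powSum {n : ℕ} (k : ℤ) (θ : Fin n → ℝ) :
    (starRingEnd ℂ) (powSum k θ) = powSum (-k) θ := by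
  simp [powSum, conj_cbeChar]

lemma powSum_zero {n : ℕ} (θ : Fin n → ℝ) : powSum 0 θ = n := by
  simp [powSum, cbeChar_zero]

lemma norm_powSum_le {n : ℕ} (k : ℤ) (θ : Fin n → ℝ) : ‖powSum k θ‖ ≤ n := by
  refine (norm_sum_le _ _).trans ?_
  simp [norm_cbeChar]

lemma norm_powSum_neg {n : ℕ} (k : ℤ) (θ : Fin n → ℝ) : ‖powSum (-k) θ‖ = ‖powSum k θ‖ := by
  rw [← conj_powSum, RCLike.norm_conj]

lemma powSum_mul_neg {n : ℕ} (k : ℤ) (θ : Fin n → ℝ) :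
    powSum k θ * powSum (-k) θ = ((‖powSum k θ‖ ^ 2 : ℝ) : ℂ) := by
  rw [← conj_powSum, Complex.mul_conj, Complex.normSq_eq_norm_sq]

lemma circlePeriodic_powSum {n : ℕ} (k : ℤ) : CirclePeriodic (fun θ : Fin n → ℝ => powSum k θ) := by
  intro θ θ' h
  simp only [powSum]
  refine Finset.sum_congr rfl fun μ _ => ?_
  rw [cbeChar_zpow, h, ← cbeChar_zpow]

lemma CirclePeriodic.mul {n : ℕ} {f g : (Fin n → ℝ) → ℂ} (hf : CirclePeriodic f)
    (hg : CirclePeriodic g) : CirclePeriodic (fun θ => f θ * g θ) := by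
  intro θ θ' h
  simp only [hf θ θ' h, hg θ θ' h]

lemma hasDerivAt_coord {n : ℕ} (i μ : Fin n) (θ : Fin n → ℝ) :
    HasDerivAt (fun t : ℝ => (θ + t • (Pi.single i (1 : ℝ) : Fin n → ℝ)) μ)
      ((Pi.single i (1 : ℝ) : Fin n → ℝ) μ) 0 := by
  simp only [Pi.add_apply, Pi.smul_apply, smul_eq_mul]
  simpa using ((hasDerivAt_id (0 : ℝ)).mul_const ((Pi.single i (1 : ℝ) : Fin n → ℝ) μ)).const_add
    (θ μ)

lemma hasDerivAt_cbeChar (k : ℤ) (x : ℝ) :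
    HasDerivAt (cbeChar k) (Complex.I * k * cbeChar k x) x := by
  unfold cbeChar
  have h := ((Complex.ofRealCLM.hasDerivAt (x := x)).const_mul (Complex.I * (k : ℂ))).cexp
  simp only [Complex.ofRealCLM_apply, Complex.ofReal_one, mul_one] at h
  rwa [mul_comm (Complex.exp _)] at h

lemma hasLineDerivAt_cbeChar {n : ℕ} (k : ℤ) (i μ : Fin n) (θ : Fin n → ℝ) :
    HasLineDerivAt ℝ (fun θ : Fin n → ℝ => cbeChar k (θ μ))
      (if μ = i then Complex.I * k * cbeChar k (θ i) else 0) θ (Pi.single i (1 : ℝ)) := by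
  have h := (hasDerivAt_cbeChar k ((θ + (0 : ℝ) • (Pi.single i (1 : ℝ) : Fin n → ℝ)) μ)).scomp
    (0 : ℝ) (hasDerivAt_coord i μ θ)
  unfold HasLineDerivAt
  refine h.congr_deriv ?_
  by_cases hμ : μ = i
  · subst hμ; simp
  · simp [hμ]

lemma hasLineDerivAt_powSum {n : ℕ} (k : ℤ) (i : Fin n) (θ : Fin n → ℝ) :
    HasLineDerivAt ℝ (fun θ : Fin n → ℝ => powSum k θ)
      (Complex.I * k * cbeChar k (θ i)) θ (Pi.single i (1 : ℝ)) := by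
  have h := HasDerivAt.fun_sum (u := Finset.univ) (fun μ (_ : μ ∈ Finset.univ) =>
    (hasLineDerivAt_cbeChar k i μ θ))
  simpa [HasLineDerivAt, powSum] using h

lemma HasLineDerivAt.mul' {n : ℕ} {f g : (Fin n → ℝ) → ℂ} {f' g' : ℂ} {θ v : Fin n → ℝ}
    (hf : HasLineDerivAt ℝ f f' θ v) (hg : HasLineDerivAt ℝ g g' θ v) :
    HasLineDerivAt ℝ (fun θ => f θ * g θ) (f' * g θ + f θ * g') θ v := by
  have h := HasDerivAt.fun_mul hf hg
  simpa only [HasLineDerivAt, zero_smul, add_zero] using h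

/-! ### Divergence theorem on the torus -/

lemma cbeCube_eq_Icc (n : ℕ) : cbeCube n = Set.Icc 0 (fun _ => 2 * Real.pi) := by
  rw [cbeCube, Set.pi_univ_Icc]; rfl

lemma isCompact_cbeCube (n : ℕ) : IsCompact (cbeCube n) := by
  rw [cbeCube_eq_Icc]; exact isCompact_Icc

/-- The divergence of a periodic vector field integrates to zero: in the divergence theorem the
contributions of opposite faces of the cube cancel. -/
lemma integral_divergence_eq_zero {n : ℕ} (f g : Fin n → (Fin n → ℝ) → ℂ)
    (hf : ∀ i, ContDiff ℝ 1 (f i)) (hper : ∀ i, CirclePeriodic (f i))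
    (hd : ∀ i θ, HasLineDerivAt ℝ (f i) (g i θ) θ (Pi.single i (1 : ℝ))) :
    ∫ θ in cbeCube n, ∑ i, g i θ = 0 := by
  cases n with
  | zero => simp
  | succ m =>
    have hg : ∀ i θ, fderiv ℝ (f i) θ (Pi.single i (1 : ℝ)) = g i θ := fun i θ =>
      ((((hf i).differentiable one_ne_zero θ).hasFDerivAt).hasLineDerivAt _).unique (hd i θ)
    have hgc : ∀ i, Continuous (g i) := fun i => by
      have : g i = fun θ => fderiv ℝ (f i) θ (Pi.single i (1 : ℝ)) := by
        funext θ; exact (hg i θ).symm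
      rw [this]
      exact ((hf i).continuous_fderiv one_ne_zero).clm_apply continuous_const
    have hle : (0 : Fin (m + 1) → ℝ) ≤ fun _ => 2 * Real.pi := fun _ => by
      simpa using Real.pi_pos.le
    have key := integral_divergence_of_hasFDerivAt_off_countable' (0 : Fin (m + 1) → ℝ)
      (fun _ => 2 * Real.pi) hle f (fun i θ => fderiv ℝ (f i) θ) ∅ Set.countable_empty
      (fun i => (hf i).continuous.continuousOn)
      (fun θ _ i => ((hf i).differentiable one_ne_zero θ).hasFDerivAt)
      (by
        simp only [hg]
        exact (continuous_finsetSum _ fun i _ => hgc i).continuousOn.integrableOn_compact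
          isCompact_Icc)
    simp only [hg] at key
    rw [cbeCube_eq_Icc, key]
    refine Finset.sum_eq_zero fun i _ => ?_
    rw [sub_eq_zero]
    congr 1
    funext x
    refine hper i _ _ fun μ => ?_
    refine Fin.succAboveCases i ?_ (fun l => ?_) μ
    · simpa using cbeChar_two_pi
    · simp

/-! ### Integration by parts -/

lemma chordSq_eq_norm (x y : ℝ) : chordSq x y = ‖cbeChar 1 x - cbeChar 1 y‖ ^ 2 := by
  have h : ∀ x : ℝ, cbeChar 1 x = ⟨Real.cos x, Real.sin x⟩ := fun x => by
    rw [cbeChar, show Complex.I * ((1 : ℤ) : ℂ) * (x : ℂ) = x * Complex.I by push_cast; ring]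
    apply Complex.ext
    · simp [Complex.exp_ofReal_mul_I_re]
    · simp [Complex.exp_ofReal_mul_I_im]
  rw [← Complex.normSq_eq_norm_sq, h, h, Complex.normSq_apply, chordSq, Real.cos_sub]
  simp only [Complex.sub_re, Complex.sub_im]
  nlinarith [Real.sin_sq_add_cos_sq x, Real.sin_sq_add_cos_sq y]

lemma chordSq_nonneg (x y : ℝ) : 0 ≤ chordSq x y := by
  rw [chordSq_eq_norm]; positivity

lemma pairPoly_mul_sub (j : ℕ) (x y : ℝ) :
    pairPoly j x y * (cbeChar 1 x - cbeChar 1 y) =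
      (cbeChar 1 x + cbeChar 1 y) * (cbeChar j x - cbeChar j y) := by
  have hp : ∀ (k : ℕ) (x : ℝ), cbeChar 1 x ^ k = cbeChar k x := fun k x => by
    rw [cbeChar_zpow (k : ℤ), zpow_natCast]
  have h1 : pairPoly j x y = (cbeChar 1 x + cbeChar 1 y) *
      ∑ k ∈ Finset.range j, cbeChar 1 x ^ k * cbeChar 1 y ^ (j - 1 - k) := by
    rw [pairPoly, Finset.mul_sum]
    refine Finset.sum_congr rfl fun k hk => ?_
    have hk' := Finset.mem_range.mp hk
    have e1 : (j : ℤ) - 1 - k = ((j - 1 - k : ℕ) : ℤ) := by omega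
    have e2 : (j : ℤ) - k = 1 + ((j - 1 - k : ℕ) : ℤ) := by omega
    rw [hp, hp, e1, e2, ← cbeChar_mul, ← cbeChar_mul]
    ring
  rw [h1, mul_assoc, geom_sum₂_mul, hp, hp]

/-- The symmetrized interaction: multiplied by `z^j - w^j`, the singular kernel
`2 sin(x-y)/|z-w|²`, which is `i (z+w)/(z-w)`, becomes a polynomial in `z` and `w`. -/
lemma two_sin_mul_sub (j : ℕ) (x y : ℝ) :
    ((2 * Real.sin (x - y) : ℝ) : ℂ) * (cbeChar j x - cbeChar j y) =
      Complex.I * (chordSq x y : ℂ) * pairPoly j x y := by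
  have hinv : ∀ x : ℝ, cbeChar 1 x * cbeChar (-1) x = 1 := fun x => by
    rw [cbeChar_mul]; exact cbeChar_zero x
  have hs : ((2 * Real.sin (x - y) : ℝ) : ℂ) =
      (cbeChar (-1) x * cbeChar 1 y - cbeChar 1 x * cbeChar (-1) y) * Complex.I := by
    push_cast
    rw [Complex.sin]
    simp only [cbeChar, ← Complex.exp_add]
    rw [mul_div_cancel₀ _ two_ne_zero]
    congr 3 <;> (push_cast; ring_nf)
  have hq : (chordSq x y : ℂ) =
      (cbeChar 1 x - cbeChar 1 y) * (cbeChar (-1) x - cbeChar (-1) y) := by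
    rw [chordSq_eq_norm, ← Complex.normSq_eq_norm_sq, ← Complex.mul_conj, map_sub,
      conj_cbeChar, conj_cbeChar]
  rw [hs, hq]
  have h := pairPoly_mul_sub j x y
  have hx := hinv x
  have hy := hinv y
  linear_combination (-Complex.I * (cbeChar (-1) x - cbeChar (-1) y)) * h +
    (Complex.I * (cbeChar j x - cbeChar j y)) * (hy - hx)

lemma cbeWeight_eq_regWeight (β : ℝ) (n : ℕ) (θ : Fin n → ℝ) :
    cbeWeight β n θ = regWeight β 0 θ := by
  unfold cbeWeight regWeight cbePairs
  refine Finset.prod_congr rfl fun p _ => ?_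
  rw [add_zero, chordSq_eq_norm, ← Real.rpow_natCast, ← Real.rpow_mul (norm_nonneg _)]
  simp only [cbeChar, Int.cast_one, mul_one]
  congr 1
  push_cast; ring

lemma regWeight_nonneg (β : ℝ) {ε : ℝ} (hε : 0 ≤ ε) {n : ℕ} (θ : Fin n → ℝ) :
    0 ≤ regWeight β ε θ :=
  Finset.prod_nonneg fun _ _ => Real.rpow_nonneg (add_nonneg (chordSq_nonneg _ _) hε) _

lemma regWeight_mono {β : ℝ} (hβ : 0 < β) {ε δ : ℝ} (hε : 0 ≤ ε) (h : ε ≤ δ) {n : ℕ}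
    (θ : Fin n → ℝ) : regWeight β ε θ ≤ regWeight β δ θ := by
  refine Finset.prod_le_prod (fun p _ => Real.rpow_nonneg (add_nonneg (chordSq_nonneg _ _) hε) _)
    fun p _ => Real.rpow_le_rpow (add_nonneg (chordSq_nonneg _ _) hε) ?_ (by positivity)
  linarith

lemma continuous_regWeight {β : ℝ} (hβ : 0 < β) (n : ℕ) :
    Continuous (fun q : ℝ × (Fin n → ℝ) => regWeight β q.1 q.2) := by
  unfold regWeight chordSq
  refine continuous_finsetProd _ fun p _ => ?_
  refine Continuous.rpow_const (by fun_prop) fun _ => Or.inr (by positivity)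

lemma contDiff_regWeight (β : ℝ) {ε : ℝ} (hε : 0 < ε) (n : ℕ) :
    ContDiff ℝ 1 (fun θ : Fin n → ℝ => regWeight β ε θ) := by
  unfold regWeight
  refine contDiff_prod fun p _ => ?_
  refine ContDiff.rpow_const_of_ne ?_ fun θ => ?_
  · unfold chordSq
    fun_prop
  · have := chordSq_nonneg (θ p.1) (θ p.2)
    positivity

lemma regWeight_eq_exp (β : ℝ) {ε : ℝ} (hε : 0 < ε) {n : ℕ} (θ : Fin n → ℝ) :
    regWeight β ε θ =
      Real.exp (∑ p ∈ cbePairs n, Real.log (chordSq (θ p.1) (θ p.2) + ε) * (β / 2)) := by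
  rw [Real.exp_sum]
  refine Finset.prod_congr rfl fun p _ => ?_
  have := chordSq_nonneg (θ p.1) (θ p.2)
  rw [Real.rpow_def_of_pos (by positivity)]

lemma hasLineDerivAt_regWeight (β : ℝ) {ε : ℝ} (hε : 0 < ε) {n : ℕ} (i : Fin n) (θ : Fin n → ℝ) :
    HasLineDerivAt ℝ (fun θ : Fin n → ℝ => (regWeight β ε θ : ℂ))
      ((regWeight β ε θ * ∑ p ∈ cbePairs n,
        (2 * Real.sin (θ p.1 - θ p.2) / (chordSq (θ p.1) (θ p.2) + ε)) * (β / 2) *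
          ((Pi.single i (1 : ℝ) : Fin n → ℝ) p.1 - (Pi.single i (1 : ℝ) : Fin n → ℝ) p.2) : ℝ) : ℂ)
      θ (Pi.single i (1 : ℝ)) := by
  unfold HasLineDerivAt
  refine HasDerivAt.ofReal_comp ?_
  simp only [regWeight_eq_exp β hε]
  have h : ∀ p ∈ cbePairs n, HasDerivAt (fun t : ℝ =>
      Real.log (chordSq ((θ + t • (Pi.single i (1 : ℝ) : Fin n → ℝ)) p.1)
        ((θ + t • (Pi.single i (1 : ℝ) : Fin n → ℝ)) p.2) + ε) * (β / 2))
      ((2 * Real.sin (θ p.1 - θ p.2) / (chordSq (θ p.1) (θ p.2) + ε)) * (β / 2) *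
          ((Pi.single i (1 : ℝ) : Fin n → ℝ) p.1 - (Pi.single i (1 : ℝ) : Fin n → ℝ) p.2)) 0 := by
    intro p _
    have hne : chordSq ((θ + (0 : ℝ) • (Pi.single i (1 : ℝ) : Fin n → ℝ)) p.1)
        ((θ + (0 : ℝ) • (Pi.single i (1 : ℝ) : Fin n → ℝ)) p.2) + ε ≠ 0 := by
      have := chordSq_nonneg ((θ + (0 : ℝ) • (Pi.single i (1 : ℝ) : Fin n → ℝ)) p.1)
        ((θ + (0 : ℝ) • (Pi.single i (1 : ℝ) : Fin n → ℝ)) p.2)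
      positivity
    have h1 := (((((hasDerivAt_coord i p.1 θ).fun_sub
      (hasDerivAt_coord i p.2 θ)).cos.const_mul 2).const_sub 2).add_const ε)
    have h2 := (h1.log hne).mul_const (β / 2)
    refine h2.congr_deriv ?_
    simp only [zero_smul, add_zero, chordSq]
    ring
  refine (HasDerivAt.fun_sum h).exp.congr_deriv ?_
  simp only [zero_smul, add_zero]

lemma circlePeriodic_regWeight (β ε : ℝ) (n : ℕ) :
    CirclePeriodic (fun θ : Fin n → ℝ => (regWeight β ε θ : ℂ)) := by
  intro θ θ' h
  simp only [regWeight, chordSq_eq_norm, h]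

lemma sum_single_sub {n : ℕ} (c : Fin n → ℂ) (p : Fin n × Fin n) :
    ∑ i, c i * (((Pi.single i (1 : ℝ) : Fin n → ℝ) p.1 -
      (Pi.single i (1 : ℝ) : Fin n → ℝ) p.2 : ℝ) : ℂ) = c p.1 - c p.2 := by
  have h : ∀ a : Fin n, ∑ i, c i * (((Pi.single i (1 : ℝ) : Fin n → ℝ) a : ℝ) : ℂ) = c a := by
    intro a
    rw [Finset.sum_eq_single a]
    · simp
    · intro b _ hb
      simp [Pi.single_eq_of_ne' hb]
    · simp
  simp only [Complex.ofReal_sub, mul_sub, Finset.sum_sub_distrib, h]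

/-- Integration by parts for the smooth density `regWeight β ε`, along the vector field with
components `e^{ijθ_i} G(θ)`. -/
lemma schwinger_dyson_reg (β : ℝ) {ε : ℝ} (hε : 0 < ε) {n : ℕ} (j : ℕ) (G : (Fin n → ℝ) → ℂ)
    (dG : Fin n → (Fin n → ℝ) → ℂ) (hG : ContDiff ℝ 1 G) (hper : CirclePeriodic G)
    (hd : ∀ i θ, HasLineDerivAt ℝ G (dG i θ) θ (Pi.single i (1 : ℝ))) :
    ∫ θ in cbeCube n, ((Complex.I * j * powSum j θ * G θ + ∑ i, cbeChar j (θ i) * dG i θ) *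
        (regWeight β ε θ : ℂ) +
      ∑ p ∈ cbePairs n, (β / 2) * Complex.I * pairPoly j (θ p.1) (θ p.2) * G θ *
        ((chordSq (θ p.1) (θ p.2) / (chordSq (θ p.1) (θ p.2) + ε) * regWeight β ε θ : ℝ) : ℂ))
      = 0 := by
  have hcharper : ∀ i : Fin n, CirclePeriodic (fun θ : Fin n → ℝ => cbeChar j (θ i)) := by
    intro i θ θ' h
    simp only
    rw [cbeChar_zpow, h, ← cbeChar_zpow]
  have key := integral_divergence_eq_zero (n := n)
    (fun i θ => cbeChar j (θ i) * G θ * (regWeight β ε θ : ℂ)) _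
    (fun i => ((contDiff_cbeChar_apply j i).mul hG).mul
      (Complex.ofRealCLM.contDiff.comp (contDiff_regWeight β hε n)))
    (fun i => ((hcharper i).mul hper).mul (circlePeriodic_regWeight β ε n))
    (fun i θ => ((hasLineDerivAt_cbeChar j i i θ).mul' (hd i θ)).mul'
      (hasLineDerivAt_regWeight β hε i θ))
  rw [← key]
  congr 1
  funext θ
  simp only [if_true]
  rw [Finset.sum_add_distrib]
  congr 1
  · simp only [powSum, Finset.mul_sum, Finset.sum_mul, ← Finset.sum_add_distrib]
    refine Finset.sum_congr rfl fun i _ => ?_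
    push_cast
    ring
  · have h1 : ∀ i : Fin n, cbeChar j (θ i) * G θ * ((regWeight β ε θ * ∑ p ∈ cbePairs n,
        (2 * Real.sin (θ p.1 - θ p.2) / (chordSq (θ p.1) (θ p.2) + ε)) * (β / 2) *
          ((Pi.single i (1 : ℝ) : Fin n → ℝ) p.1 -
            (Pi.single i (1 : ℝ) : Fin n → ℝ) p.2) : ℝ) : ℂ) =
        ∑ p ∈ cbePairs n, (G θ * ((regWeight β ε θ *
          (2 * Real.sin (θ p.1 - θ p.2) / (chordSq (θ p.1) (θ p.2) + ε)) * (β / 2) : ℝ) : ℂ)) *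
          (cbeChar j (θ i) * (((Pi.single i (1 : ℝ) : Fin n → ℝ) p.1 -
            (Pi.single i (1 : ℝ) : Fin n → ℝ) p.2 : ℝ) : ℂ)) := by
      intro i
      rw [Finset.mul_sum, Complex.ofReal_sum, Finset.mul_sum]
      refine Finset.sum_congr rfl fun p _ => ?_
      push_cast
      ring
    simp only [h1]
    rw [Finset.sum_comm]
    refine Finset.sum_congr rfl fun p _ => ?_
    rw [← Finset.mul_sum, sum_single_sub (fun i => cbeChar j (θ i)) p]
    have h2 := two_sin_mul_sub j (θ p.1) (θ p.2)
    push_cast at h2 ⊢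
    linear_combination (-(G θ * (regWeight β ε θ : ℂ) * (β / 2) /
      ((chordSq (θ p.1) (θ p.2) : ℂ) + ε))) * h2

/-- The factor `q / (q + ε)` is harmless in the limit `ε → 0`, for every configuration. -/
lemma tendsto_ratio_mul_regWeight {β : ℝ} (hβ : 0 < β) {n : ℕ} (θ : Fin n → ℝ)
    {p : Fin n × Fin n} (hp : p ∈ cbePairs n) :
    Tendsto (fun ε : ℝ => chordSq (θ p.1) (θ p.2) / (chordSq (θ p.1) (θ p.2) + ε) *
      regWeight β ε θ) (𝓝[>] 0) (𝓝 (regWeight β 0 θ)) := by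
  have hw : Tendsto (fun ε : ℝ => regWeight β ε θ) (𝓝[>] 0) (𝓝 (regWeight β 0 θ)) :=
    (((continuous_regWeight hβ n).comp (Continuous.prodMk_left θ)).tendsto 0).mono_left
      nhdsWithin_le_nhds
  by_cases hq : chordSq (θ p.1) (θ p.2) = 0
  · -- At a collision both the left side and the density vanish.
    have h0 : regWeight β 0 θ = 0 := by
      refine Finset.prod_eq_zero hp ?_
      rw [hq, add_zero, Real.zero_rpow (by positivity)]
    simp [hq, h0]
  · have h1 : Tendsto (fun ε : ℝ => chordSq (θ p.1) (θ p.2) / (chordSq (θ p.1) (θ p.2) + ε))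
        (𝓝[>] 0) (𝓝 1) := by
      have : ContinuousAt (fun ε : ℝ => chordSq (θ p.1) (θ p.2) / (chordSq (θ p.1) (θ p.2) + ε))
          0 := by
        refine ContinuousAt.div (by fun_prop) (by fun_prop) (by simpa using hq)
      have h2 := this.tendsto
      simp only [add_zero, div_self hq] at h2
      exact h2.mono_left nhdsWithin_le_nhds
    simpa using h1.mul hw

@[fun_prop]
lemma continuous_pairPoly {n : ℕ} (j : ℕ) (a b : Fin n) :
    Continuous (fun θ : Fin n → ℝ => pairPoly j (θ a) (θ b)) := by
  unfold pairPoly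
  refine continuous_finsetSum _ fun k _ => ?_
  have h : ∀ (k : ℤ) (c : Fin n), Continuous (fun θ : Fin n → ℝ => cbeChar k (θ c)) :=
    fun k c => (continuous_cbeChar k).comp (continuous_apply c)
  exact ((h _ _).mul (h _ _)).add ((h _ _).mul (h _ _))

/-- The Schwinger–Dyson (loop) equations of the ensemble. They hold for every `β > 0`, also where
the density is not differentiable, as the limit `ε → 0` of the regularized equations. -/
lemma schwinger_dyson {β : ℝ} (hβ : 0 < β) {n : ℕ} (j : ℕ) (G : (Fin n → ℝ) → ℂ)
    (dG : Fin n → (Fin n → ℝ) → ℂ) (hG : ContDiff ℝ 1 G) (hper : CirclePeriodic G)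
    (hd : ∀ i θ, HasLineDerivAt ℝ G (dG i θ) θ (Pi.single i (1 : ℝ))) :
    ∫ θ in cbeCube n, (Complex.I * j * powSum j θ * G θ + (∑ i, cbeChar j (θ i) * dG i θ) +
      (β / 2) * Complex.I * (∑ p ∈ cbePairs n, pairPoly j (θ p.1) (θ p.2)) * G θ) *
        (cbeWeight β n θ : ℂ) = 0 := by
  have hdc : ∀ i, Continuous (dG i) := fun i => by
    have : dG i = fun θ => fderiv ℝ G θ (Pi.single i (1 : ℝ)) := by
      funext θ
      exact (((hG.differentiable one_ne_zero θ).hasFDerivAt.hasLineDerivAt _).unique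
        (hd i θ)).symm
    rw [this]
    exact (hG.continuous_fderiv one_ne_zero).clm_apply continuous_const
  have hGc := hG.continuous
  have hcc : ∀ (k : ℤ) (c : Fin n), Continuous (fun θ : Fin n → ℝ => cbeChar k (θ c)) :=
    fun k c => (continuous_cbeChar k).comp (continuous_apply c)
  have hA : Continuous (fun θ : Fin n → ℝ => Complex.I * j * powSum j θ * G θ +
      ∑ i, cbeChar j (θ i) * dG i θ) := by fun_prop
  have hB : ∀ p : Fin n × Fin n, Continuous (fun θ : Fin n → ℝ =>
      (β / 2) * Complex.I * pairPoly j (θ p.1) (θ p.2) * G θ) := fun p => by fun_prop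
  have hwc : ∀ ε, Continuous (fun θ : Fin n → ℝ => regWeight β ε θ) := fun ε =>
    (continuous_regWeight hβ n).comp (f := fun θ : Fin n → ℝ => (ε, θ)) (by fun_prop)
  have hqc : ∀ p : Fin n × Fin n, Continuous (fun θ : Fin n → ℝ =>
      chordSq (θ p.1) (θ p.2)) := fun p => by unfold chordSq; fun_prop
  have hlim : Tendsto (fun ε : ℝ => ∫ θ in cbeCube n,
      ((Complex.I * j * powSum j θ * G θ + ∑ i, cbeChar j (θ i) * dG i θ) *
        (regWeight β ε θ : ℂ) +
      ∑ p ∈ cbePairs n, (β / 2) * Complex.I * pairPoly j (θ p.1) (θ p.2) * G θ *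
        ((chordSq (θ p.1) (θ p.2) / (chordSq (θ p.1) (θ p.2) + ε) * regWeight β ε θ : ℝ) : ℂ)))
      (𝓝[>] 0) (𝓝 (∫ θ in cbeCube n,
      ((Complex.I * j * powSum j θ * G θ + ∑ i, cbeChar j (θ i) * dG i θ) *
        (regWeight β 0 θ : ℂ) +
      ∑ p ∈ cbePairs n, (β / 2) * Complex.I * pairPoly j (θ p.1) (θ p.2) * G θ *
        (regWeight β 0 θ : ℂ)))) := by
    refine tendsto_integral_filter_of_dominated_convergence
      (fun θ => ‖Complex.I * j * powSum j θ * G θ + ∑ i, cbeChar j (θ i) * dG i θ‖ *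
          regWeight β 1 θ + ∑ p ∈ cbePairs n,
            ‖(β / 2) * Complex.I * pairPoly j (θ p.1) (θ p.2) * G θ‖ * regWeight β 1 θ)
      ?_ ?_ ?_ ?_
    · filter_upwards [self_mem_nhdsWithin] with ε hε
      have hε : 0 < ε := hε
      refine Continuous.aestronglyMeasurable ?_
      refine (hA.mul (Complex.continuous_ofReal.comp (hwc ε))).add
        (continuous_finsetSum _ fun p _ => (hB p).mul (Complex.continuous_ofReal.comp ?_))
      refine ((hqc p).div ((hqc p).add continuous_const) fun θ => ?_).mul (hwc ε)
      have hq := chordSq_nonneg (θ p.1) (θ p.2)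
      change chordSq (θ p.1) (θ p.2) + ε ≠ 0
      positivity
    · filter_upwards [Ioc_mem_nhdsGT (zero_lt_one' ℝ)] with ε hε
      refine Eventually.of_forall fun θ => ?_
      have hw0 := regWeight_nonneg β hε.1.le θ
      have hw1 := regWeight_mono hβ hε.1.le hε.2 θ
      refine (norm_add_le _ _).trans (add_le_add ?_ ((norm_sum_le _ _).trans
        (Finset.sum_le_sum fun p _ => ?_)))
      · rw [norm_mul, Complex.norm_real, Real.norm_of_nonneg hw0]
        gcongr
      · have hq := chordSq_nonneg (θ p.1) (θ p.2)
        have hε0 := hε.1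
        have hr : chordSq (θ p.1) (θ p.2) / (chordSq (θ p.1) (θ p.2) + ε) ≤ 1 :=
          div_le_one_of_le₀ (by linarith) (by linarith)
        rw [norm_mul, Complex.norm_real, Real.norm_of_nonneg (by positivity)]
        refine mul_le_mul_of_nonneg_left ?_ (norm_nonneg _)
        exact (mul_le_of_le_one_left hw0 hr).trans hw1
    · refine ContinuousOn.integrableOn_compact (isCompact_cbeCube n) (Continuous.continuousOn ?_)
      exact (hA.norm.mul (hwc 1)).add
        (continuous_finsetSum _ fun p _ => (hB p).norm.mul (hwc 1))
    · refine Eventually.of_forall fun θ => ?_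
      have hw : Tendsto (fun ε : ℝ => regWeight β ε θ) (𝓝[>] 0) (𝓝 (regWeight β 0 θ)) :=
        (((continuous_regWeight hβ n).comp (Continuous.prodMk_left θ)).tendsto 0).mono_left
          nhdsWithin_le_nhds
      refine Tendsto.add (((Complex.continuous_ofReal.tendsto _).comp hw).const_mul _)
        (tendsto_finsetSum _ fun p hp => Tendsto.const_mul _ ?_)
      exact (Complex.continuous_ofReal.tendsto _).comp (tendsto_ratio_mul_regWeight hβ θ hp)
  have hzero := tendsto_nhds_unique hlim (tendsto_const_nhds.congr' (by
    filter_upwards [self_mem_nhdsWithin] with ε hε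
    exact (schwinger_dyson_reg β hε j G dG hG hper hd).symm))
  rw [← hzero]
  congr 1
  funext θ
  rw [cbeWeight_eq_regWeight, ← Finset.sum_mul, ← Finset.sum_mul, ← Finset.mul_sum]
  ring

/-! ### The ensemble as a probability measure -/

/-- The total mass of the unnormalized density. -/
noncomputable def cbeZ (β : ℝ) (n : ℕ) : ℝ := ∫ θ in cbeCube n, cbeWeight β n θ

/-- The circular β-ensemble as a measure on `Fin n → ℝ`. -/
noncomputable def cbeMeasure (β : ℝ) (n : ℕ) : Measure (Fin n → ℝ) :=
  (volume.restrict (cbeCube n)).withDensity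
    (fun θ => ENNReal.ofReal (cbeWeight β n θ / cbeZ β n))

lemma continuous_cbeWeight {β : ℝ} (hβ : 0 < β) (n : ℕ) : Continuous (cbeWeight β n) := by
  have h : cbeWeight β n = fun θ => regWeight β 0 θ := by
    funext θ; exact cbeWeight_eq_regWeight β n θ
  rw [h]
  exact (continuous_regWeight hβ n).comp (f := fun θ : Fin n → ℝ => ((0 : ℝ), θ)) (by fun_prop)

lemma cbeWeight_nonneg (β : ℝ) (n : ℕ) (θ : Fin n → ℝ) : 0 ≤ cbeWeight β n θ := by
  rw [cbeWeight_eq_regWeight]; exact regWeight_nonneg β le_rfl θ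

lemma integrableOn_cbeWeight {β : ℝ} (hβ : 0 < β) (n : ℕ) :
    IntegrableOn (cbeWeight β n) (cbeCube n) :=
  (continuous_cbeWeight hβ n).continuousOn.integrableOn_compact (isCompact_cbeCube n)

lemma cbeZ_pos {β : ℝ} (hβ : 0 < β) (n : ℕ) : 0 < cbeZ β n := by
  rw [cbeZ, setIntegral_pos_iff_support_of_nonneg_ae
    (Eventually.of_forall fun θ => cbeWeight_nonneg β n θ) (integrableOn_cbeWeight hβ n)]
  have hsub : (Function.support (cbeWeight β n) ∩
      Set.univ.pi fun _ => Set.Ioo 0 (2 * Real.pi)) ⊆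
      Function.support (cbeWeight β n) ∩ cbeCube n :=
    Set.inter_subset_inter_right _ (Set.pi_mono fun _ _ => Set.Ioo_subset_Icc_self)
  refine lt_of_lt_of_le (IsOpen.measure_pos volume ?_ ?_) (measure_mono hsub)
  · exact (continuous_cbeWeight hβ n).isOpen_support.inter
      (isOpen_set_pi Set.finite_univ fun _ _ => isOpen_Ioo)
  · -- The angles `1, 1/2, 1/3, …` are distinct and lie in `(0, 2π)`.
    have hpi := Real.pi_gt_three
    have hle : ∀ μ : Fin n, (1 : ℝ) / ((μ : ℕ) + 1) ≤ 1 := fun μ =>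
      div_le_one_of_le₀ (by simp) (by positivity)
    have hpos : ∀ μ : Fin n, (0 : ℝ) < 1 / ((μ : ℕ) + 1) := fun μ => by positivity
    refine ⟨fun μ => 1 / ((μ : ℕ) + 1), ?_, fun μ _ => ⟨hpos μ, by linarith [hle μ]⟩⟩
    rw [Function.mem_support, cbeWeight_eq_regWeight]
    refine Finset.prod_ne_zero_iff.mpr fun p hp => (Real.rpow_pos_of_pos ?_ _).ne'
    rw [add_zero]
    refine lt_of_le_of_ne (chordSq_nonneg _ _) fun h0 => ?_
    have hc : Real.cos ((1 : ℝ) / ((p.1 : ℕ) + 1) - 1 / ((p.2 : ℕ) + 1)) = 1 := by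
      unfold chordSq at h0; linarith
    rw [Real.cos_eq_one_iff_of_lt_of_lt (by linarith [hle p.2, hpos p.1])
      (by linarith [hle p.1, hpos p.2]), sub_eq_zero] at hc
    have hlt : p.1 < p.2 := by simpa [cbePairs] using hp
    have h2 : ((p.1 : ℕ) : ℝ) = (p.2 : ℕ) := by
      rw [one_div, one_div, inv_inj] at hc; linarith
    have h3 : (p.1 : ℕ) = p.2 := by exact_mod_cast h2
    exact absurd h3 (Fin.lt_def.mp hlt).ne

lemma integral_cbeMeasure {β : ℝ} (hβ : 0 < β) {n : ℕ} {E : Type*} [NormedAddCommGroup E]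
    [NormedSpace ℝ E] (f : (Fin n → ℝ) → E) :
    ∫ θ, f θ ∂(cbeMeasure β n) =
      ∫ θ in cbeCube n, (cbeWeight β n θ / cbeZ β n) • f θ := by
  rw [cbeMeasure, integral_withDensity_eq_integral_toReal_smul
    ((continuous_cbeWeight hβ n).div_const _).measurable.ennreal_ofReal
    (Eventually.of_forall fun θ => ENNReal.ofReal_lt_top)]
  congr 1
  funext θ
  rw [ENNReal.toReal_ofReal (div_nonneg (cbeWeight_nonneg _ _ _) (cbeZ_pos hβ n).le)]

lemma isProbabilityMeasure_cbeMeasure {β : ℝ} (hβ : 0 < β) (n : ℕ) :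
    IsProbabilityMeasure (cbeMeasure β n) := by
  refine ⟨?_⟩
  rw [cbeMeasure, withDensity_apply _ MeasurableSet.univ, Measure.restrict_univ,
    ← ofReal_integral_eq_lintegral_ofReal ((integrableOn_cbeWeight hβ n).div_const _)
    (Eventually.of_forall fun θ => div_nonneg (cbeWeight_nonneg _ _ _) (cbeZ_pos hβ n).le),
    integral_div, ← cbeZ, div_self (cbeZ_pos hβ n).ne', ENNReal.ofReal_one]

lemma integrable_cbeMeasure {β : ℝ} (hβ : 0 < β) {n : ℕ} {E : Type*} [NormedAddCommGroup E]
    [NormedSpace ℝ E] {f : (Fin n → ℝ) → E} (hf : Continuous f) :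
    Integrable f (cbeMeasure β n) := by
  rw [cbeMeasure, integrable_withDensity_iff_integrable_smul'
    ((continuous_cbeWeight hβ n).div_const _).measurable.ennreal_ofReal
    (Eventually.of_forall fun θ => ENNReal.ofReal_lt_top)]
  have h : (fun θ => (ENNReal.ofReal (cbeWeight β n θ / cbeZ β n)).toReal • f θ) =
      fun θ => (cbeWeight β n θ / cbeZ β n) • f θ := by
    funext θ
    rw [ENNReal.toReal_ofReal (div_nonneg (cbeWeight_nonneg _ _ _) (cbeZ_pos hβ n).le)]
  rw [h]
  exact (((continuous_cbeWeight hβ n).div_const _).smul hf).continuousOn.integrableOn_compact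
    (isCompact_cbeCube n)

lemma cbeExp_eq {β : ℝ} (hβ : 0 < β) (n : ℕ) (f : (Fin n → ℝ) → ℝ) :
    cbeExp β n f = ∫ θ, f θ ∂(cbeMeasure β n) := by
  rw [integral_cbeMeasure hβ, cbeExp, ← integral_div]
  congr 1
  funext θ
  rw [cbeZ, smul_eq_mul]; ring

lemma cbeExpC_eq {β : ℝ} (hβ : 0 < β) (n : ℕ) (f : (Fin n → ℝ) → ℂ) :
    cbeExpC β n f = ∫ θ, f θ ∂(cbeMeasure β n) := by
  rw [integral_cbeMeasure hβ, cbeExpC, ← integral_div]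
  congr 1
  funext θ
  rw [cbeZ, Complex.real_smul]; push_cast; ring

lemma schwinger_dyson_cbeMeasure {β : ℝ} (hβ : 0 < β) {n : ℕ} (j : ℕ) (G : (Fin n → ℝ) → ℂ)
    (dG : Fin n → (Fin n → ℝ) → ℂ) (hG : ContDiff ℝ 1 G) (hper : CirclePeriodic G)
    (hd : ∀ i θ, HasLineDerivAt ℝ G (dG i θ) θ (Pi.single i (1 : ℝ))) :
    ∫ θ, (Complex.I * j * powSum j θ * G θ + (∑ i, cbeChar j (θ i) * dG i θ) +
      (β / 2) * Complex.I * (∑ p ∈ cbePairs n, pairPoly j (θ p.1) (θ p.2)) * G θ)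
        ∂(cbeMeasure β n) = 0 := by
  rw [← cbeExpC_eq hβ, cbeExpC, schwinger_dyson hβ j G dG hG hper hd, zero_div]

/-! ### The interaction term -/

lemma pairPoly_symm (j : ℕ) (x y : ℝ) : pairPoly j x y = pairPoly j y x := by
  unfold pairPoly
  rw [← Finset.sum_range_reflect]
  refine Finset.sum_congr rfl fun k hk => ?_
  have hk' := Finset.mem_range.mp hk
  have e1 : ((j - 1 - k : ℕ) : ℤ) = j - 1 - k := by omega
  rw [e1, show (j : ℤ) - 1 - k + 1 = j - k by ring, show (j : ℤ) - 1 - (j - 1 - k) = k by ring,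
    show (j : ℤ) - (j - 1 - k) = k + 1 by ring]
  ring

lemma pairPoly_self (j : ℕ) (x : ℝ) : pairPoly j x x = 2 * j * cbeChar j x := by
  unfold pairPoly
  have h : ∀ k ∈ Finset.range j, cbeChar (k + 1) x * cbeChar (j - 1 - k) x +
      cbeChar k x * cbeChar (j - k) x = 2 * cbeChar j x := fun k _ => by
    rw [cbeChar_mul, cbeChar_mul, show (k : ℤ) + 1 + (j - 1 - k) = j by ring,
      show (k : ℤ) + (j - k) = j by ring]
    ring
  rw [Finset.sum_congr rfl h]
  simp
  ring

lemma sum_all_eq {n : ℕ} (f : Fin n → Fin n → ℂ) (hf : ∀ a b, f a b = f b a) :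
    ∑ a, ∑ b, f a b = 2 * ∑ p ∈ cbePairs n, f p.1 p.2 + ∑ a, f a a := by
  have h1 : ∑ p ∈ cbePairs n, f p.1 p.2 = ∑ a, ∑ b, if a < b then f a b else 0 := by
    rw [cbePairs, Finset.sum_filter, ← Finset.univ_product_univ, Finset.sum_product]
  have h2 : ∑ a, ∑ b, (if a < b then f a b else 0) = ∑ a, ∑ b, if b < a then f a b else 0 := by
    rw [Finset.sum_comm]
    exact Finset.sum_congr rfl fun a _ => Finset.sum_congr rfl fun b _ => by rw [hf]
  have h3 : ∑ a, f a a = ∑ a, ∑ b, if a = b then f a b else 0 := by simp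
  rw [two_mul]
  nth_rewrite 2 [h1]
  rw [h1, h2, h3, ← h2]
  nth_rewrite 2 [h2]
  simp only [← Finset.sum_add_distrib]
  refine Finset.sum_congr rfl fun a _ => Finset.sum_congr rfl fun b _ => ?_
  rcases lt_trichotomy a b with h | h | h
  · simp [h, h.not_gt, h.ne]
  · simp [h]
  · simp [h, h.not_gt, h.ne']

/-- The interaction term expressed through power sums. -/
lemma sum_pairPoly {n : ℕ} (m : ℕ) (θ : Fin n → ℝ) :
    ∑ p ∈ cbePairs n, pairPoly (m + 1) (θ p.1) (θ p.2) =
      ((n : ℂ) - (m + 1)) * powSum (m + 1) θ +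
        ∑ k ∈ Finset.range m, powSum (k + 1) θ * powSum (m - k) θ := by
  have h := sum_all_eq (fun a b => pairPoly (m + 1) (θ a) (θ b)) fun a b => pairPoly_symm _ _ _
  have hprod : ∀ k l : ℤ, ∑ a, ∑ b, cbeChar k (θ a) * cbeChar l (θ b) =
      powSum k θ * powSum l θ := fun k l => by
    rw [powSum, powSum, Finset.sum_mul_sum]
  have hall : ∑ a, ∑ b, pairPoly (m + 1) (θ a) (θ b) =
      2 * (n * powSum (m + 1) θ) +
        2 * ∑ k ∈ Finset.range m, powSum (k + 1) θ * powSum (m - k) θ := by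
    unfold pairPoly
    have hswap : ∀ F : ℕ → Fin n → Fin n → ℂ, ∑ a, ∑ b, ∑ k ∈ Finset.range (m + 1), F k a b =
        ∑ k ∈ Finset.range (m + 1), ∑ a, ∑ b, F k a b := fun F => by
      rw [Finset.sum_comm (s := Finset.range (m + 1))]
      exact Finset.sum_congr rfl fun a _ => Finset.sum_comm
    rw [hswap]
    simp only [Finset.sum_add_distrib, hprod]
    rw [Finset.sum_range_succ, Finset.sum_range_succ']
    have e1 : ∀ k : ℕ, ((m + 1 : ℕ) : ℤ) - 1 - k = m - k := fun k => by push_cast; ring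
    have e2 : ∀ k : ℕ, ((m + 1 : ℕ) : ℤ) - ((k + 1 : ℕ) : ℤ) = m - k := fun k => by
      push_cast; ring
    simp only [e1, e2]
    simp only [Nat.cast_zero, sub_zero, sub_self, powSum_zero, Nat.cast_add, Nat.cast_one]
    ring
  simp only [pairPoly_self] at h
  rw [hall, ← Finset.mul_sum] at h
  change _ = 2 * _ + 2 * ((m + 1 : ℕ) : ℂ) * powSum ((m + 1 : ℕ) : ℤ) θ at h
  push_cast at h
  linear_combination (-1 / 2 : ℂ) * h

/-! ### Loop equations for the moments of power sums -/

lemma abs_integral_le_of_integral_I_mul {Ω : Type*} [MeasurableSpace Ω] {ν : Measure Ω}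
    {F : Ω → ℂ} {f : Ω → ℝ} {R : Ω → ℂ} (h0 : ∫ ω, F ω ∂ν = 0)
    (hF : ∀ ω, F ω = Complex.I * ((f ω : ℂ) + R ω)) (hf : Integrable f ν) (hR : Integrable R ν) :
    |∫ ω, f ω ∂ν| ≤ ∫ ω, ‖R ω‖ ∂ν := by
  have hf' : Integrable (fun ω => (f ω : ℂ)) ν := hf.ofReal
  simp only [hF] at h0
  rw [integral_const_mul, integral_add hf' hR, integral_complex_ofReal] at h0
  have h1 : ((∫ ω, f ω ∂ν : ℝ) : ℂ) = -∫ ω, R ω ∂ν := by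
    rcases mul_eq_zero.mp h0 with h | h
    · exact absurd h Complex.I_ne_zero
    · exact eq_neg_of_add_eq_zero_left h
  have h2 : |∫ ω, f ω ∂ν| = ‖∫ ω, R ω ∂ν‖ := by
    rw [← norm_neg (∫ ω, R ω ∂ν), ← h1, Complex.norm_real, Real.norm_eq_abs]
  rw [h2]
  exact norm_integral_le_integral_norm _

/-- The case of the constant vector field (an infinitesimal rotation) and `G = p_j`. -/
lemma integral_powSum {β : ℝ} (hβ : 0 < β) {n : ℕ} (j : ℕ) (hj : 1 ≤ j) :
    ∫ θ : Fin n → ℝ, powSum j θ ∂(cbeMeasure β n) = 0 := by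
  have h := schwinger_dyson_cbeMeasure hβ (n := n) 0 (fun θ => powSum j θ)
    (fun i θ => Complex.I * (j : ℤ) * cbeChar j (θ i)) (contDiff_powSum j)
    (circlePeriodic_powSum j) (fun i θ => hasLineDerivAt_powSum j i θ)
  have h2 : ∀ θ : Fin n → ℝ, (Complex.I * ((0 : ℕ) : ℂ) * powSum ((0 : ℕ) : ℤ) θ * powSum j θ +
      (∑ i, cbeChar ((0 : ℕ) : ℤ) (θ i) * (Complex.I * (j : ℤ) * cbeChar j (θ i))) +
      (β / 2) * Complex.I * (∑ p ∈ cbePairs n, pairPoly 0 (θ p.1) (θ p.2)) * powSum j θ) =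
      (Complex.I * j) * powSum j θ := fun θ => by
    simp [pairPoly, cbeChar_zero, powSum, Finset.mul_sum]
  simp only [h2] at h
  rw [integral_const_mul] at h
  refine (mul_eq_zero.mp h).resolve_left (mul_ne_zero Complex.I_ne_zero ?_)
  exact_mod_cast (by omega : j ≠ 0)

/-- The loop equation for `G = conj p_j`, `j = m + 1`. -/
lemma second_moment_bound {β : ℝ} (hβ : 0 < β) (n m : ℕ) :
    |∫ θ : Fin n → ℝ, ((((m + 1 : ℕ) : ℝ) + β / 2 * (n - (m + 1 : ℕ))) *
        ‖powSum (m + 1 : ℕ) θ‖ ^ 2 - (m + 1 : ℕ) * n) ∂(cbeMeasure β n)| ≤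
      ∫ θ : Fin n → ℝ, ‖((β / 2 : ℝ) : ℂ) * ∑ k ∈ Finset.range m, powSum (k + 1) θ *
        powSum (m - k) θ * powSum (-(m + 1 : ℕ)) θ‖ ∂(cbeMeasure β n) := by
  refine abs_integral_le_of_integral_I_mul (schwinger_dyson_cbeMeasure hβ (n := n) (m + 1)
    (fun θ => powSum (-(m + 1 : ℕ)) θ) _ (contDiff_powSum _)
    (circlePeriodic_powSum _) (fun i θ => hasLineDerivAt_powSum _ i θ)) (fun θ => ?_)
    (integrable_cbeMeasure hβ (by fun_prop)) (integrable_cbeMeasure hβ (by fun_prop))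
  have h1 : ∑ i, cbeChar ((m + 1 : ℕ) : ℤ) (θ i) * (Complex.I * ((-((m + 1 : ℕ) : ℤ) : ℤ) : ℂ) *
      cbeChar (-((m + 1 : ℕ) : ℤ)) (θ i)) = -Complex.I * (m + 1 : ℕ) * n := by
    have : ∀ i : Fin n, cbeChar ((m + 1 : ℕ) : ℤ) (θ i) *
        (Complex.I * ((-((m + 1 : ℕ) : ℤ) : ℤ) : ℂ) *
        cbeChar (-((m + 1 : ℕ) : ℤ)) (θ i)) = -Complex.I * (m + 1 : ℕ) := fun i => by
      have h := cbeChar_mul ((m + 1 : ℕ) : ℤ) (-((m + 1 : ℕ) : ℤ)) (θ i)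
      rw [add_neg_cancel, cbeChar_zero] at h
      rw [show ((-((m + 1 : ℕ) : ℤ) : ℤ) : ℂ) = -((m + 1 : ℕ) : ℂ) by push_cast; ring]
      linear_combination (-Complex.I * (m + 1 : ℕ)) * h
    simp only [this]
    simp
    ring
  have h2 := sum_pairPoly m θ
  have h3 := powSum_mul_neg ((m + 1 : ℕ) : ℤ) θ
  rw [h1, h2, ← Finset.sum_mul]
  push_cast at h3 ⊢
  linear_combination (Complex.I * (m + 1) + β / 2 * Complex.I * (n - (m + 1))) * h3

/-- The loop equation for `G = |p_j|² conj p_j`, `j = m + 1`. -/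
lemma fourth_moment_bound {β : ℝ} (hβ : 0 < β) (n m : ℕ) :
    |∫ θ : Fin n → ℝ, ((((m + 1 : ℕ) : ℝ) + β / 2 * (n - (m + 1 : ℕ))) *
        ‖powSum (m + 1 : ℕ) θ‖ ^ 4 - 2 * (m + 1 : ℕ) * n * ‖powSum (m + 1 : ℕ) θ‖ ^ 2)
          ∂(cbeMeasure β n)| ≤
      ∫ θ : Fin n → ℝ, ‖((m + 1 : ℕ) : ℂ) * powSum ((m + 1 : ℕ) + (m + 1 : ℕ)) θ *
          (powSum (-(m + 1 : ℕ)) θ * powSum (-(m + 1 : ℕ)) θ) +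
        ((β / 2 : ℝ) : ℂ) * ∑ k ∈ Finset.range m, powSum (k + 1) θ *
        powSum (m - k) θ * (powSum (-(m + 1 : ℕ)) θ * powSum (-(m + 1 : ℕ)) θ *
          powSum (m + 1 : ℕ) θ)‖ ∂(cbeMeasure β n) := by
  refine abs_integral_le_of_integral_I_mul (schwinger_dyson_cbeMeasure hβ (n := n) (m + 1)
    (fun θ => powSum (-(m + 1 : ℕ)) θ * powSum (-(m + 1 : ℕ)) θ * powSum (m + 1 : ℕ) θ) _
    (((contDiff_powSum _).mul (contDiff_powSum _)).mul (contDiff_powSum _))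
    (((circlePeriodic_powSum _).mul (circlePeriodic_powSum _)).mul (circlePeriodic_powSum _))
    (fun i θ => ((hasLineDerivAt_powSum _ i θ).mul' (hasLineDerivAt_powSum _ i θ)).mul'
      (hasLineDerivAt_powSum _ i θ))) (fun θ => ?_)
    (integrable_cbeMeasure hβ (by fun_prop)) (integrable_cbeMeasure hβ (by fun_prop))
  have h2 := sum_pairPoly m θ
  have h3 := powSum_mul_neg ((m + 1 : ℕ) : ℤ) θ
  have h4 : ((‖powSum ((m + 1 : ℕ) : ℤ) θ‖ ^ 4 : ℝ) : ℂ) =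
      (powSum ((m + 1 : ℕ) : ℤ) θ * powSum (-((m + 1 : ℕ) : ℤ)) θ) ^ 2 := by
    rw [h3]; push_cast; ring
  have hz : ((-((m + 1 : ℕ) : ℤ) : ℤ) : ℂ) = -((m + 1 : ℕ) : ℂ) := by push_cast; ring
  have hz' : (((m + 1 : ℕ) : ℤ) : ℂ) = ((m + 1 : ℕ) : ℂ) := by push_cast; ring
  rw [hz, hz', h2, ← Finset.sum_mul]
  set J : ℂ := ((m + 1 : ℕ) : ℂ) with hJ
  set a := powSum ((m + 1 : ℕ) : ℤ) θ with ha
  set b := powSum (-((m + 1 : ℕ) : ℤ)) θ with hb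
  have h1 : ∑ i, cbeChar ((m + 1 : ℕ) : ℤ) (θ i) *
      ((Complex.I * -J * cbeChar (-((m + 1 : ℕ) : ℤ)) (θ i) * b +
        b * (Complex.I * -J * cbeChar (-((m + 1 : ℕ) : ℤ)) (θ i))) * a +
        b * b * (Complex.I * J * cbeChar ((m + 1 : ℕ) : ℤ) (θ i))) =
      -2 * Complex.I * J * n * a * b +
        Complex.I * J * b * b * powSum ((m + 1 : ℕ) + (m + 1 : ℕ)) θ := by
    have : ∀ i : Fin n, cbeChar ((m + 1 : ℕ) : ℤ) (θ i) *
      ((Complex.I * -J * cbeChar (-((m + 1 : ℕ) : ℤ)) (θ i) * b +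
        b * (Complex.I * -J * cbeChar (-((m + 1 : ℕ) : ℤ)) (θ i))) * a +
        b * b * (Complex.I * J * cbeChar ((m + 1 : ℕ) : ℤ) (θ i))) =
        -2 * Complex.I * J * a * b +
        Complex.I * J * b * b * cbeChar ((m + 1 : ℕ) + (m + 1 : ℕ)) (θ i) := fun i => by
      have h := cbeChar_mul ((m + 1 : ℕ) : ℤ) (-((m + 1 : ℕ) : ℤ)) (θ i)
      rw [add_neg_cancel, cbeChar_zero] at h
      have h' := cbeChar_mul ((m + 1 : ℕ) : ℤ) ((m + 1 : ℕ) : ℤ) (θ i)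
      linear_combination (-2 * Complex.I * J * a * b) * h + (Complex.I * J * b * b) * h'
    simp only [this]
    rw [Finset.sum_add_distrib, powSum, Finset.mul_sum]
    congr 1
    simp only [Finset.sum_const, Finset.card_univ, Fintype.card_fin, nsmul_eq_mul]
    ring
  rw [h1]
  have hJ' : (m : ℂ) + 1 = J := by rw [hJ]; push_cast; ring
  have ha' : powSum ((m : ℤ) + 1) θ = a := by rw [ha]; push_cast; rfl
  rw [hJ', ha']
  push_cast at h3 h4 ⊢
  rw [hJ', ← h3, h4]
  ring

/-! ### Bounds uniform in `n` and the limit -/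

/-- A weighted Young inequality; a large `δ` makes the coefficient of `x ^ 4` small. -/
lemma young_bound {x y δ : ℝ} (hx : 0 ≤ x) (hy : 0 ≤ y) (hδ : 0 < δ) :
    y * x ^ 3 ≤ δ⁻¹ * x ^ 4 + δ ^ 3 * y ^ 4 := by
  rcases le_total (δ * y) x with h | h
  · have h1 : y ≤ δ⁻¹ * x := by
      rw [inv_mul_eq_div, le_div_iff₀ hδ]; linarith
    calc y * x ^ 3 ≤ δ⁻¹ * x * x ^ 3 := by gcongr
      _ = δ⁻¹ * x ^ 4 := by ring
      _ ≤ _ := le_add_of_nonneg_right (by positivity)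
  · calc y * x ^ 3 ≤ y * (δ * y) ^ 3 := by gcongr
      _ = δ ^ 3 * y ^ 4 := by ring
      _ ≤ _ := le_add_of_nonneg_left (by positivity)

/-- Fourth moments of the power sums are bounded in `n`. By strong induction on `j`: in the loop
equation for `|p_j|⁴`, whose leading coefficient is of order `n`, one factor in each error term is
bounded trivially by `n`, and Young's inequality absorbs the remaining powers of `p_j`. -/
lemma fourth_moment_bounded {β : ℝ} (hβ : 0 < β) (j : ℕ) (hj : 1 ≤ j) :
    ∃ C : ℝ, ∀ n : ℕ, 2 * j ≤ n →
      ∫ θ : Fin n → ℝ, ‖powSum j θ‖ ^ 4 ∂(cbeMeasure β n) ≤ C := by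
  induction j using Nat.strong_induction_on with
  | _ j ih =>
  obtain ⟨m, rfl⟩ : ∃ m, j = m + 1 := ⟨j - 1, by omega⟩
  have ih' : ∀ k : ℕ, ∃ C : ℝ, k < m → ∀ n : ℕ, 2 * (m + 1) ≤ n →
      ∫ θ : Fin n → ℝ, ‖powSum (k + 1) θ‖ ^ 4 ∂(cbeMeasure β n) ≤ C := fun k => by
    by_cases hk : k < m
    · obtain ⟨C, hC⟩ := ih (k + 1) (by omega) (by omega)
      refine ⟨C, fun _ n hn => ?_⟩
      have := hC n (by omega)
      push_cast at this
      exact this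
    · exact ⟨0, fun h => absurd h hk⟩
  choose C hC using ih'
  set c := β / 2 with hc
  have hc0 : 0 < c := by positivity
  set J : ℝ := ((m + 1 : ℕ) : ℝ) with hJ
  have hJ0 : 0 < J := by rw [hJ]; positivity
  have hmJ : (m : ℝ) ≤ J := by rw [hJ]; push_cast; linarith
  refine ⟨(18 * J ^ 2 / c + c * (8 * J) ^ 3 * ∑ k ∈ Finset.range m, C k) / (c / 4),
    fun n hn => ?_⟩
  have hprob := isProbabilityMeasure_cbeMeasure hβ n
  have hn' : 2 * J ≤ n := by rw [hJ]; exact_mod_cast hn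
  have hn0 : (0 : ℝ) < n := by linarith
  have hI : ∀ {f : (Fin n → ℝ) → ℝ}, Continuous f → Integrable f (cbeMeasure β n) :=
    fun hf => integrable_cbeMeasure hβ hf
  have hb := le_of_abs_le (fourth_moment_bound hβ n m)
  rw [← sub_nonpos, ← integral_sub (hI (by fun_prop)) (hI (by fun_prop))] at hb
  have hpt : ∀ θ : Fin n → ℝ, (n : ℝ) * (c / 4 * ‖powSum (m + 1 : ℕ) θ‖ ^ 4 - 18 * J ^ 2 / c -
      c * (8 * J) ^ 3 * ∑ k ∈ Finset.range m, ‖powSum (k + 1) θ‖ ^ 4) ≤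
      ((J + c * (n - J)) *
        ‖powSum (m + 1 : ℕ) θ‖ ^ 4 - 2 * J * n * ‖powSum (m + 1 : ℕ) θ‖ ^ 2) -
      ‖((m + 1 : ℕ) : ℂ) * powSum ((m + 1 : ℕ) + (m + 1 : ℕ)) θ *
          (powSum (-(m + 1 : ℕ)) θ * powSum (-(m + 1 : ℕ)) θ) +
        ((β / 2 : ℝ) : ℂ) * ∑ k ∈ Finset.range m, powSum (k + 1) θ *
        powSum (m - k) θ * (powSum (-(m + 1 : ℕ)) θ * powSum (-(m + 1 : ℕ)) θ *
          powSum (m + 1 : ℕ) θ)‖ := by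
    intro θ
    set x := ‖powSum ((m + 1 : ℕ) : ℤ) θ‖ with hx
    have hx0 : 0 ≤ x := norm_nonneg _
    have hxneg : ‖powSum (-((m + 1 : ℕ) : ℤ)) θ‖ = x := norm_powSum_neg _ _
    have hR : ‖((m + 1 : ℕ) : ℂ) * powSum ((m + 1 : ℕ) + (m + 1 : ℕ)) θ *
          (powSum (-(m + 1 : ℕ)) θ * powSum (-(m + 1 : ℕ)) θ) +
        ((β / 2 : ℝ) : ℂ) * ∑ k ∈ Finset.range m, powSum (k + 1) θ *
        powSum (m - k) θ * (powSum (-(m + 1 : ℕ)) θ * powSum (-(m + 1 : ℕ)) θ *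
          powSum (m + 1 : ℕ) θ)‖ ≤ J * n * (x * x) +
          c * ∑ k ∈ Finset.range m, n * (‖powSum (k + 1) θ‖ * x ^ 3) := by
      refine (norm_add_le _ _).trans (add_le_add ?_ ?_)
      · rw [norm_mul, norm_mul, norm_mul, hxneg, Complex.norm_natCast]
        gcongr
        exact norm_powSum_le _ _
      · rw [norm_mul, Complex.norm_real, Real.norm_of_nonneg hc0.le]
        refine mul_le_mul_of_nonneg_left ((norm_sum_le _ _).trans
          (Finset.sum_le_sum fun k _ => ?_)) hc0.le
        rw [norm_mul, norm_mul, norm_mul, norm_mul, hxneg, ← hx]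
        have := norm_powSum_le ((m : ℤ) - k) θ
        calc ‖powSum (k + 1) θ‖ * ‖powSum (m - k) θ‖ * (x * x * x)
            ≤ ‖powSum (k + 1) θ‖ * n * (x * x * x) := by gcongr
          _ = _ := by ring
    have hyoung : ∑ k ∈ Finset.range m, ‖powSum (k + 1) θ‖ * x ^ 3 ≤
        1 / 8 * x ^ 4 + (8 * J) ^ 3 * ∑ k ∈ Finset.range m, ‖powSum (k + 1) θ‖ ^ 4 := by
      refine (Finset.sum_le_sum fun (k : ℕ) _ => young_bound hx0
        (norm_nonneg (powSum ((k : ℤ) + 1) θ))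
        (by positivity : 0 < 8 * J)).trans ?_
      rw [Finset.sum_add_distrib, Finset.mul_sum, Finset.sum_const, Finset.card_range,
        nsmul_eq_mul]
      refine add_le_add ?_ le_rfl
      rw [← mul_assoc]
      refine mul_le_mul_of_nonneg_right ?_ (by positivity)
      rw [← div_eq_mul_inv, div_le_iff₀ (by positivity)]
      linarith
    -- The difference of the two sides is a square.
    have hsq : 3 * J * x ^ 2 ≤ c / 8 * x ^ 4 + 18 * J ^ 2 / c := by
      have h0 : 0 ≤ (c * x ^ 2 - 12 * J) ^ 2 / (8 * c) := by positivity
      have h1 : (c * x ^ 2 - 12 * J) ^ 2 / (8 * c) =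
          c / 8 * x ^ 4 + 18 * J ^ 2 / c - 3 * J * x ^ 2 := by
        field_simp; ring
      linarith
    have hlead : n * (c / 2 * x ^ 4) ≤ (J + c * (n - J)) * x ^ 4 := by
      have : n * (c / 2) ≤ J + c * (n - J) := by nlinarith
      calc n * (c / 2 * x ^ 4) = n * (c / 2) * x ^ 4 := by ring
        _ ≤ _ := by gcongr
    rw [← Finset.mul_sum] at hR
    have hy2 := mul_le_mul_of_nonneg_left hyoung (mul_nonneg hn0.le hc0.le)
    have hs2 := mul_le_mul_of_nonneg_left hsq hn0.le
    nlinarith [hR, hy2, hs2, hlead]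
  have hint := (integral_mono (hI (by fun_prop)) (hI (by fun_prop)) hpt).trans hb
  rw [integral_const_mul] at hint
  have hint2 := nonpos_of_mul_nonpos_right hint hn0
  rw [integral_sub (hI (by fun_prop)) (hI (by fun_prop)),
    integral_sub (hI (by fun_prop)) (hI (by fun_prop)), integral_const_mul, integral_const_mul,
    integral_finsetSum _ (fun k _ => hI (by fun_prop)), integral_const, probReal_univ,
    one_smul] at hint2
  rw [le_div_iff₀ (by positivity)]
  have hsum : ∑ k ∈ Finset.range m, ∫ θ : Fin n → ℝ, ‖powSum (k + 1) θ‖ ^ 4 ∂(cbeMeasure β n) ≤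
      ∑ k ∈ Finset.range m, C k :=
    Finset.sum_le_sum fun k hk => hC k (Finset.mem_range.mp hk) n hn
  have := mul_le_mul_of_nonneg_left hsum (by positivity : 0 ≤ c * (8 * J) ^ 3)
  linarith

lemma mul_three_le {x y z : ℝ} : x * y * z ≤ x ^ 4 + y ^ 4 + z ^ 4 + 1 := by
  nlinarith [sq_nonneg (x * y - z), sq_nonneg (x ^ 2 - y ^ 2), sq_nonneg (z ^ 2 - 1),
    sq_nonneg (x ^ 2), sq_nonneg (y ^ 2), sq_nonneg (z ^ 2)]

/-- The second moment satisfies its loop equation up to an error bounded in `n`. -/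
lemma second_moment_error {β : ℝ} (hβ : 0 < β) (j : ℕ) (hj : 1 ≤ j) :
    ∃ D : ℝ, ∀ n : ℕ, 2 * j ≤ n →
      |(j + β / 2 * (n - j)) * ∫ θ : Fin n → ℝ, ‖powSum j θ‖ ^ 2 ∂(cbeMeasure β n) - j * n| ≤
        D := by
  obtain ⟨m, rfl⟩ : ∃ m, j = m + 1 := ⟨j - 1, by omega⟩
  have hex : ∀ k : ℕ, ∃ C : ℝ, 1 ≤ k → ∀ n : ℕ, 2 * k ≤ n →
      ∫ θ : Fin n → ℝ, ‖powSum k θ‖ ^ 4 ∂(cbeMeasure β n) ≤ C := fun k => by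
    by_cases hk : 1 ≤ k
    · obtain ⟨C, hC⟩ := fourth_moment_bounded hβ k hk
      exact ⟨C, fun _ => hC⟩
    · exact ⟨0, fun h => absurd h hk⟩
  choose C hC using hex
  refine ⟨β / 2 * ∑ k ∈ Finset.range m, (C (k + 1) + C (m - k) + C (m + 1) + 1), fun n hn => ?_⟩
  have hprob := isProbabilityMeasure_cbeMeasure hβ n
  have hI : ∀ {f : (Fin n → ℝ) → ℝ}, Continuous f → Integrable f (cbeMeasure β n) :=
    fun hf => integrable_cbeMeasure hβ hf
  have hb := second_moment_bound hβ n m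
  rw [integral_sub (hI (by fun_prop)) (hI (by fun_prop)), integral_const_mul, integral_const,
    probReal_univ, one_smul] at hb
  refine hb.trans ?_
  have hpt : ∀ θ : Fin n → ℝ, ‖((β / 2 : ℝ) : ℂ) * ∑ k ∈ Finset.range m, powSum (k + 1) θ *
        powSum (m - k) θ * powSum (-(m + 1 : ℕ)) θ‖ ≤
      β / 2 * ∑ k ∈ Finset.range m, (‖powSum (k + 1 : ℕ) θ‖ ^ 4 + ‖powSum (m - k : ℕ) θ‖ ^ 4 +
        ‖powSum (m + 1 : ℕ) θ‖ ^ 4 + 1) := by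
    intro θ
    rw [norm_mul, Complex.norm_real, Real.norm_of_nonneg (by positivity)]
    refine mul_le_mul_of_nonneg_left ((norm_sum_le _ _).trans
      (Finset.sum_le_sum fun k hk => ?_)) (by positivity)
    have e1 : ((m - k : ℕ) : ℤ) = m - k := by have := Finset.mem_range.mp hk; omega
    rw [norm_mul, norm_mul, norm_powSum_neg, e1, Nat.cast_add k 1, Nat.cast_one]
    exact mul_three_le
  refine (integral_mono (hI (by fun_prop)) (hI (by fun_prop)) hpt).trans ?_
  rw [integral_const_mul, integral_finsetSum _ (fun k _ => hI (by fun_prop))]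
  refine mul_le_mul_of_nonneg_left (Finset.sum_le_sum fun k hk => ?_) (by positivity)
  have hk' := Finset.mem_range.mp hk
  rw [integral_add (hI (by fun_prop)) (hI (by fun_prop)),
    integral_add (hI (by fun_prop)) (hI (by fun_prop)),
    integral_add (hI (by fun_prop)) (hI (by fun_prop)), integral_const, probReal_univ, one_smul]
  have h1 := hC (k + 1) (by omega) n (by omega)
  have h2 := hC (m - k) (by omega) n (by omega)
  have h3 := hC (m + 1) (by omega) n hn
  linarith

/-- Solving the loop equation gives `E|p_j|² = (jn + O(1)) / (j + (β/2)(n - j))`. -/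
lemma tendsto_second_moment {β : ℝ} (hβ : 0 < β) (j : ℕ) (hj : 1 ≤ j) :
    Tendsto (fun n : ℕ => ∫ θ : Fin n → ℝ, ‖powSum j θ‖ ^ 2 ∂(cbeMeasure β n)) atTop
      (𝓝 (2 * j / β)) := by
  obtain ⟨D, hD⟩ := second_moment_error hβ j hj
  have hj0 : (0 : ℝ) < j := by exact_mod_cast hj
  rw [tendsto_iff_norm_sub_tendsto_zero]
  refine squeeze_zero' (g := fun n : ℕ => (D + |(j : ℝ) ^ 2 - 2 * j ^ 2 / β|) / (β / 4) / n)
    (Eventually.of_forall fun _ => norm_nonneg _) ?_ (tendsto_const_div_atTop_nhds_zero_nat _)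
  filter_upwards [eventually_ge_atTop (2 * j)] with n hn
  have hn' : 2 * (j : ℝ) ≤ n := by exact_mod_cast hn
  have hn0 : (0 : ℝ) < n := by linarith
  have h := hD n hn
  set X := ∫ θ : Fin n → ℝ, ‖powSum j θ‖ ^ 2 ∂(cbeMeasure β n)
  have hlead : β / 4 * n ≤ j + β / 2 * (n - j) := by nlinarith
  rw [Real.norm_eq_abs, div_div, le_div_iff₀ (by positivity)]
  calc |X - 2 * j / β| * (β / 4 * n) ≤ |X - 2 * j / β| * (j + β / 2 * (n - j)) := by gcongr
    _ = |((j + β / 2 * (n - j)) * X - j * n) + (j ^ 2 - 2 * j ^ 2 / β)| := by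
      rw [← abs_of_nonneg (a := j + β / 2 * (n - j)) (le_trans (by positivity) hlead),
        ← abs_mul, abs_of_nonneg (a := j + β / 2 * (n - j)) (le_trans (by positivity) hlead)]
      congr 1
      field_simp
      ring
    _ ≤ _ := (abs_add_le _ _).trans (by gcongr)

/-- Moment convergence for the circular β-ensemble: for each `j ≥ 1`,
`E_n^β[∑ e^{ijθ_μ}] → 0` and `E_n^β[|∑ e^{ijθ_μ}|²] → 2j/β` as `n → ∞`. -/
theorem moment_convergence_circle (β : ℝ) (hβ : 0 < β) (j : ℕ) (hj : 1 ≤ j) :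
    Tendsto (fun n =>
        cbeExpC β n (fun θ => ∑ μ, Complex.exp (Complex.I * (j : ℂ) * (θ μ : ℂ))))
      atTop (𝓝 0) ∧
    Tendsto (fun n =>
        cbeExp β n (fun θ => ‖∑ μ, Complex.exp (Complex.I * (j : ℂ) * (θ μ : ℂ))‖ ^ 2))
      atTop (𝓝 (2 * j / β)) := by
  have hp : ∀ (n : ℕ) (θ : Fin n → ℝ),
      ∑ μ, Complex.exp (Complex.I * (j : ℂ) * (θ μ : ℂ)) = powSum j θ := fun n θ => by
    simp [powSum, cbeChar]
  simp only [hp]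
  constructor
  · refine tendsto_const_nhds.congr fun n => ?_
    rw [cbeExpC_eq hβ, integral_powSum hβ j hj]
  · refine (tendsto_second_moment hβ j hj).congr fun n => ?_
    rw [cbeExp_eq hβ]
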